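/- Let K ≥ 1 and let f0^1, …, f0^K be probability densities on [0,1], each continuous and strictly positive on [0,1], and let ε > 0. Then there exist finite Beta mixtures g0 and g^1, …, g^K — each of the form Σ_{h=1}^{H} w_h · f_Beta(·; a_h, b_h) with weights w_h > 0 summing to 1 and parameters a_h, b_h > 0 — and a mixing weight δ ∈ (0,1), such that for every k = 1, …, K, the Kullback–Leibler divergence ∫₀¹ f0^k(x) · log( f0^k(x) / ( δ·g0(x) + (1−δ)·g^k(x) ) ) dx is strictly less than ε. That is, a collection of positive continuous densities can be simultaneously ε-approximated in Kullback–Leibler divergence by mixtures sharing a single common component g0 together with idiosyncratic components g^k. -/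

import Mathlib

/-!
Fix a Beta mixture `g₀` and a weight `δ` with `-log (1 - δ) < ε`. If `f ≤ C * g` on `[0,1]`, then
`f / (δ * g₀ + (1 - δ) * g) ≤ C / (1 - δ)`, so the divergence is at most `log C - log (1 - δ)`,
whatever `g₀` is. A suitable `δ` depends only on `ε`, hence serves all densities at once. It
remains to find, for `C > 1`, a Beta mixture `g` with `f ≤ C * g`. Bernstein polynomials are
multiples of Beta densities, so the Bernstein approximation of `f + η` is a multiple `c * g` of a
Beta mixture; it dominates `f` once it is `η`-close to `f + η`, and integrating
`c * g ≤ f + 2 * η` gives `c ≤ 1 + 2 * η`.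
-/

open MeasureTheory Real

/-- The Beta density on `(0,1)` with parameters `a, b`. -/
noncomputable def fBeta (a b x : ℝ) : ℝ :=
  (Real.Gamma (a + b) / (Real.Gamma a * Real.Gamma b)) * x ^ (a - 1) * (1 - x) ^ (b - 1)

/-- `g` is a finite mixture of Beta densities: `g = ∑_{h=1}^H w_h f_Beta(·; a_h, b_h)`
with positive weights summing to one and positive parameters. -/
def IsBetaMixture (g : ℝ → ℝ) : Prop :=
  ∃ (H : ℕ) (w a b : Fin H → ℝ), 1 ≤ H ∧
    (∀ h, 0 < w h) ∧ (∑ h, w h = 1) ∧ (∀ h, 0 < a h) ∧ (∀ h, 0 < b h) ∧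
    ∀ x, g x = ∑ h, w h * fBeta (a h) (b h) x

section BetaDensity

variable {a b : ℝ}

lemma fBeta_nonneg (ha : 0 < a) (hb : 0 < b) {x : ℝ} (hx : x ∈ Set.Icc 0 1) :
    0 ≤ fBeta a b x := by
  have hGamma : 0 ≤ Gamma (a + b) / (Gamma a * Gamma b) := by positivity
  exact mul_nonneg (mul_nonneg hGamma (rpow_nonneg hx.1 _)) (rpow_nonneg (sub_nonneg.2 hx.2) _)

lemma lintegral_fBeta (ha : 0 < a) (hb : 0 < b) :
    ∫⁻ x in Set.Ioo 0 1, ENNReal.ofReal (fBeta a b x) = 1 := by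
  simpa only [ProbabilityTheory.lintegral_betaPDF, ProbabilityTheory.beta, one_div_div, fBeta]
    using ProbabilityTheory.lintegral_betaPDF_eq_one ha hb

lemma integral_fBeta (ha : 0 < a) (hb : 0 < b) : ∫ x in (0 : ℝ)..1, fBeta a b x = 1 := by
  have hmeas : Measurable (fBeta a b) := by unfold fBeta; fun_prop
  have hnonneg : 0 ≤ᵐ[volume.restrict (Set.Ioo 0 1)] fBeta a b :=
    ae_restrict_of_forall_mem measurableSet_Ioo fun x hx =>
      fBeta_nonneg ha hb (Set.Ioo_subset_Icc_self hx)
  rw [intervalIntegral.integral_of_le zero_le_one, integral_Ioc_eq_integral_Ioo,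
    integral_eq_lintegral_of_nonneg_ae hnonneg hmeas.aestronglyMeasurable,
    lintegral_fBeta ha hb, ENNReal.toReal_one]

lemma intervalIntegrable_fBeta (ha : 0 < a) (hb : 0 < b) :
    IntervalIntegrable (fBeta a b) volume 0 1 :=
  intervalIntegral.intervalIntegrable_of_integral_ne_zero
    ((integral_fBeta ha hb).trans_ne one_ne_zero)

lemma fBeta_eq_mul_bernstein {n k : ℕ} (hk : k ≤ n) (x : unitInterval) :
    fBeta (k + 1) ((n - k : ℕ) + 1) x = (n + 1) * bernstein n k x := by
  have hsum : (k : ℝ) + 1 + ((n - k : ℕ) + 1) = (n + 1 : ℕ) + 1 := by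
    push_cast [Nat.cast_sub hk]
    ring
  rw [fBeta, hsum, bernstein_apply]
  simp only [Gamma_nat_eq_factorial, add_sub_cancel_right, rpow_natCast, Nat.cast_choose ℝ hk]
  rw [Nat.factorial_succ, Nat.cast_mul, Nat.cast_succ]
  ring

end BetaDensity

lemma isBetaMixture_sum_div_sum {ι : Type*} [Fintype ι] [Nonempty ι] {w a b : ι → ℝ}
    (hw : ∀ i, 0 < w i) (ha : ∀ i, 0 < a i) (hb : ∀ i, 0 < b i) :
    IsBetaMixture fun x => (∑ i, w i * fBeta (a i) (b i) x) / ∑ i, w i := by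
  have hsum : 0 < ∑ i, w i := Finset.sum_pos (fun i _ => hw i) Finset.univ_nonempty
  let e := (Fintype.equivFin ι).symm
  refine ⟨Fintype.card ι, fun h => w (e h) / ∑ i, w i, a ∘ e, b ∘ e, Fintype.card_pos,
    fun h => div_pos (hw _) hsum, ?_, fun h => ha _, fun h => hb _, fun x => ?_⟩
  · rw [← Finset.sum_div, e.sum_comp, div_self hsum.ne']
  · simp only [Function.comp_apply, div_mul_eq_mul_div]
    rw [← Finset.sum_div, e.sum_comp fun i => w i * fBeta (a i) (b i) x]

lemma isBetaMixture_fBeta {a b : ℝ} (ha : 0 < a) (hb : 0 < b) : IsBetaMixture (fBeta a b) := by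
  simpa using isBetaMixture_sum_div_sum (ι := Unit) (fun _ => one_pos) (fun _ => ha) fun _ => hb

namespace IsBetaMixture

variable {g : ℝ → ℝ}

lemma nonneg (hg : IsBetaMixture g) {x : ℝ} (hx : x ∈ Set.Icc 0 1) : 0 ≤ g x := by
  obtain ⟨H, w, a, b, -, hw, -, ha, hb, hg⟩ := hg
  rw [hg]
  exact Finset.sum_nonneg fun h _ => mul_nonneg (hw h).le (fBeta_nonneg (ha h) (hb h) hx)

lemma integral_eq_one (hg : IsBetaMixture g) : ∫ x in (0 : ℝ)..1, g x = 1 := by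
  obtain ⟨H, w, a, b, -, -, hsum, ha, hb, hg⟩ := hg
  simp_rw [hg]
  rw [intervalIntegral.integral_finsetSum fun h _ =>
    (intervalIntegrable_fBeta (ha h) (hb h)).const_mul (w h)]
  simp_rw [intervalIntegral.integral_const_mul, integral_fBeta (ha _) (hb _), mul_one, hsum]

lemma intervalIntegrable (hg : IsBetaMixture g) : IntervalIntegrable g volume 0 1 :=
  intervalIntegral.intervalIntegrable_of_integral_ne_zero (hg.integral_eq_one.trans_ne one_ne_zero)

end IsBetaMixture

lemma exists_isBetaMixture_bernsteinApproximation_eq (n : ℕ) {F : C(unitInterval, ℝ)}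
    (hF : ∀ x, 0 < F x) :
    ∃ (c : ℝ) (g : ℝ → ℝ), IsBetaMixture g ∧
      ∀ x : unitInterval, bernsteinApproximation n F x = c * g x := by
  let w (k : Fin (n + 1)) : ℝ := F (bernstein.z k) / (n + 1)
  have hw (k : Fin (n + 1)) : 0 < w k := div_pos (hF _) n.cast_add_one_pos
  let a (k : Fin (n + 1)) : ℝ := (k : ℕ) + 1
  let b (k : Fin (n + 1)) : ℝ := (n - k : ℕ) + 1
  have ha (k : Fin (n + 1)) : 0 < a k := Nat.cast_add_one_pos _
  have hb (k : Fin (n + 1)) : 0 < b k := Nat.cast_add_one_pos _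
  refine ⟨∑ k, w k, _, isBetaMixture_sum_div_sum hw ha hb, fun x => ?_⟩
  have hsum : ∑ k, w k ≠ 0 := (Finset.sum_pos (fun k _ => hw k) Finset.univ_nonempty).ne'
  rw [mul_div_cancel₀ _ hsum, bernsteinApproximation.apply]
  refine Finset.sum_congr rfl fun k _ => ?_
  simp only [w, a, b, fBeta_eq_mul_bernstein k.is_le, smul_eq_mul]
  field_simp

lemma exists_isBetaMixture_le_mul {f : ℝ → ℝ} (hcont : ContinuousOn f (Set.Icc 0 1))
    (hnonneg : ∀ x ∈ Set.Icc (0 : ℝ) 1, 0 ≤ f x) {C : ℝ} (hC : ∫ x in (0 : ℝ)..1, f x < C) :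
    ∃ g, IsBetaMixture g ∧ ∀ x ∈ Set.Icc (0 : ℝ) 1, f x ≤ C * g x := by
  obtain ⟨η, hη, hηC⟩ : ∃ η > 0, (∫ x in (0 : ℝ)..1, f x) + 2 * η = C :=
    ⟨(C - ∫ x in (0 : ℝ)..1, f x) / 2, by linarith, by ring⟩
  let F : C(unitInterval, ℝ) := ⟨fun x => f x + η, hcont.domRestrict.add continuous_const⟩
  obtain ⟨n, hn⟩ := ((Metric.tendsto_nhds.1 (bernsteinApproximation_uniform F)) η hη).exists
  obtain ⟨c, g, hg, hcg⟩ := exists_isBetaMixture_bernsteinApproximation_eq n (F := F)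
    fun x => add_pos_of_nonneg_of_pos (hnonneg x x.2) hη
  have hclose (x : ℝ) (hx : x ∈ Set.Icc (0 : ℝ) 1) : |c * g x - (f x + η)| < η := by
    have hdist : dist (bernsteinApproximation n F ⟨x, hx⟩) (f x + η) < η :=
      (ContinuousMap.dist_lt_iff hη).1 hn ⟨x, hx⟩
    rwa [hcg, Real.dist_eq] at hdist
  have hlower (x : ℝ) (hx : x ∈ Set.Icc (0 : ℝ) 1) : f x ≤ c * g x := by
    linarith [(abs_lt.1 (hclose x hx)).1]
  have hupper (x : ℝ) (hx : x ∈ Set.Icc (0 : ℝ) 1) : c * g x ≤ f x + 2 * η := by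
    linarith [(abs_lt.1 (hclose x hx)).2]
  have hf : IntervalIntegrable f volume 0 1 := hcont.intervalIntegrable_of_Icc zero_le_one
  have hcC : c ≤ C :=
    calc c = ∫ x in (0 : ℝ)..1, c * g x := by
          rw [intervalIntegral.integral_const_mul, hg.integral_eq_one, mul_one]
      _ ≤ ∫ x in (0 : ℝ)..1, (f x + 2 * η) :=
          intervalIntegral.integral_mono_on zero_le_one (hg.intervalIntegrable.const_mul c)
            (hf.add intervalIntegrable_const) hupper
      _ = C := by
          rw [intervalIntegral.integral_add hf intervalIntegrable_const,
            intervalIntegral.integral_const, sub_zero, one_smul, hηC]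
  exact ⟨g, hg, fun x hx =>
    (hlower x hx).trans (mul_le_mul_of_nonneg_right hcC (hg.nonneg hx))⟩

section RelativeEntropy

lemma sub_le_mul_log_div {u v : ℝ} (hu : 0 ≤ u) (hv : 0 ≤ v) (huv : v = 0 → u = 0) :
    u - v ≤ u * log (u / v) := by
  rcases hu.eq_or_lt with rfl | hu
  · simpa using hv
  have hv : 0 < v := hv.lt_of_ne' fun h => hu.ne' (huv h)
  calc u - v = u * (1 - (u / v)⁻¹) := by field_simp
    _ ≤ u * log (u / v) := by gcongr; exact one_sub_inv_le_log_of_pos (div_pos hu hv)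

lemma mul_log_div_le_mul_log {u v C : ℝ} (hu : 0 ≤ u) (hC : 0 < C) (huv : u ≤ C * v) :
    u * log (u / v) ≤ u * log C := by
  rcases hu.eq_or_lt with rfl | hu
  · simp
  have hv : 0 < v := pos_of_mul_pos_right (hu.trans_le huv) hC.le
  gcongr
  exact (div_le_iff₀ hv).2 huv

lemma le_div_mul_mixture {u v₀ v C δ : ℝ} (hv₀ : 0 ≤ v₀) (hδ : 0 ≤ δ) (hδ1 : δ < 1) (hC : 0 ≤ C)
    (huv : u ≤ C * v) : u ≤ C / (1 - δ) * (δ * v₀ + (1 - δ) * v) := by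
  have hδ1' : 0 < 1 - δ := sub_pos.2 hδ1
  calc u ≤ C * v := huv
    _ = C / (1 - δ) * ((1 - δ) * v) := by field_simp
    _ ≤ C / (1 - δ) * (δ * v₀ + (1 - δ) * v) := by
      gcongr
      exact le_add_of_nonneg_left (mul_nonneg hδ hv₀)

variable {α : Type*} {m : MeasurableSpace α} {μ : Measure α} {f h : α → ℝ} {C : ℝ}

lemma integrable_mul_log_div (hf : Integrable f μ) (hh : Integrable h μ) (hf₀ : 0 ≤ᵐ[μ] f)
    (hC : 0 < C) (hle : ∀ᵐ x ∂μ, f x ≤ C * h x) :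
    Integrable (fun x => f x * log (f x / h x)) μ := by
  have hmeas : AEStronglyMeasurable (fun x => f x * log (f x / h x)) μ :=
    (hf.aemeasurable.mul (hf.aemeasurable.div hh.aemeasurable).log).aestronglyMeasurable
  refine integrable_of_le_of_le hmeas ?_ ?_ (hf.sub hh) (hf.mul_const (log C))
  · filter_upwards [hf₀, hle] with x hx hxC
    refine sub_le_mul_log_div hx (nonneg_of_mul_nonneg_right (hx.trans hxC) hC) fun hx0 => ?_
    exact le_antisymm (by simpa [hx0] using hxC) hx
  · filter_upwards [hf₀, hle] with x hx hxC using mul_log_div_le_mul_log hx hC hxC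

lemma integral_mul_log_div_le (hf : Integrable f μ) (hh : Integrable h μ) (hf₀ : 0 ≤ᵐ[μ] f)
    (hC : 0 < C) (hle : ∀ᵐ x ∂μ, f x ≤ C * h x) :
    ∫ x, f x * log (f x / h x) ∂μ ≤ (∫ x, f x ∂μ) * log C := by
  rw [← integral_mul_const]
  refine integral_mono_ae (integrable_mul_log_div hf hh hf₀ hC hle) (hf.mul_const _) ?_
  filter_upwards [hf₀, hle] with x hx hxC using mul_log_div_le_mul_log hx hC hxC

end RelativeEntropy

lemma exists_isBetaMixture_integral_mul_log_div_lt {f : ℝ → ℝ}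
    (hcont : ContinuousOn f (Set.Icc 0 1)) (hnonneg : ∀ x ∈ Set.Icc (0 : ℝ) 1, 0 ≤ f x)
    (hint : ∫ x in (0 : ℝ)..1, f x = 1) {g₀ : ℝ → ℝ} (hg₀ : IsBetaMixture g₀) {δ ε : ℝ}
    (hδ : 0 ≤ δ) (hδε : exp (-ε) < 1 - δ) :
    ∃ g, IsBetaMixture g ∧
      IntervalIntegrable (fun x => f x * log (f x / (δ * g₀ x + (1 - δ) * g x))) volume 0 1 ∧
      ∫ x in (0 : ℝ)..1, f x * log (f x / (δ * g₀ x + (1 - δ) * g x)) < ε := by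
  have hδ1 : 0 < 1 - δ := (exp_pos _).trans hδε
  have hexp : 1 < (1 - δ) * exp ε := by
    rwa [exp_neg, inv_lt_iff_one_lt_mul₀ (exp_pos ε)] at hδε
  obtain ⟨C, hC1, hC⟩ := exists_between hexp
  have hCδ : 0 < C / (1 - δ) := div_pos (one_pos.trans hC1) hδ1
  have hlog : log (C / (1 - δ)) < ε := (log_lt_iff_lt_exp hCδ).2 ((div_lt_iff₀' hδ1).2 hC)
  obtain ⟨g, hg, hfg⟩ := exists_isBetaMixture_le_mul hcont hnonneg (hint.trans_lt hC1)
  set h : ℝ → ℝ := fun x => δ * g₀ x + (1 - δ) * g x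
  have hle (x : ℝ) (hx : x ∈ Set.Ioc (0 : ℝ) 1) : f x ≤ C / (1 - δ) * h x :=
    have hx' : x ∈ Set.Icc (0 : ℝ) 1 := Set.Ioc_subset_Icc_self hx
    le_div_mul_mixture (hg₀.nonneg hx') hδ (sub_pos.1 hδ1) (one_pos.trans hC1).le (hfg x hx')
  have hf_int : IntegrableOn f (Set.Ioc 0 1) := (hcont.intervalIntegrable_of_Icc zero_le_one).1
  have hh_int : IntegrableOn h (Set.Ioc 0 1) :=
    ((hg₀.intervalIntegrable.const_mul δ).add (hg.intervalIntegrable.const_mul (1 - δ))).1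
  have hf_ae : 0 ≤ᵐ[volume.restrict (Set.Ioc 0 1)] f :=
    ae_restrict_of_forall_mem measurableSet_Ioc fun x hx => hnonneg x (Set.Ioc_subset_Icc_self hx)
  have hle_ae := ae_restrict_of_forall_mem (μ := volume) measurableSet_Ioc hle
  refine ⟨g, hg, ?_, ?_⟩
  · rw [intervalIntegrable_iff_integrableOn_Ioc_of_le zero_le_one]
    exact integrable_mul_log_div hf_int hh_int hf_ae hCδ hle_ae
  · rw [intervalIntegral.integral_of_le zero_le_one] at hint ⊢
    have hbound := integral_mul_log_div_le hf_int hh_int hf_ae hCδ hle_ae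
    rw [hint, one_mul] at hbound
    exact hbound.trans_lt hlog

theorem common_component_KL_approx_general {ι : Type*} (f0 : ι → ℝ → ℝ)
    (hcont : ∀ k, ContinuousOn (f0 k) (Set.Icc 0 1))
    (hnonneg : ∀ k, ∀ x ∈ Set.Icc (0 : ℝ) 1, 0 ≤ f0 k x)
    (hint : ∀ k, ∫ x in (0 : ℝ)..1, f0 k x = 1)
    {g0 : ℝ → ℝ} (hg0 : IsBetaMixture g0) {ε : ℝ} (hε : 0 < ε) :
    ∃ (g : ι → ℝ → ℝ) (δ : ℝ), (∀ k, IsBetaMixture (g k)) ∧ δ ∈ Set.Ioo (0 : ℝ) 1 ∧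
      ∀ k, IntervalIntegrable
          (fun x => f0 k x * log (f0 k x / (δ * g0 x + (1 - δ) * g k x))) volume 0 1 ∧
        ∫ x in (0 : ℝ)..1, f0 k x * log (f0 k x / (δ * g0 x + (1 - δ) * g k x)) < ε := by
  obtain ⟨δ, hδ, hδε⟩ : ∃ δ, 0 < δ ∧ δ < 1 - exp (-ε) :=
    exists_between (sub_pos.2 (exp_lt_one_iff.2 (neg_lt_zero.2 hε)))
  choose g hg hKL using fun k => exists_isBetaMixture_integral_mul_log_div_lt (hcont k) (hnonneg k)
    (hint k) hg0 hδ.le (lt_sub_comm.1 hδε)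
  exact ⟨g, δ, hg, ⟨hδ, hδε.trans (sub_lt_self 1 (exp_pos _))⟩, hKL⟩

/-- A finite collection of continuous strictly positive densities on `[0,1]` can be
simultaneously `ε`-approximated in Kullback–Leibler divergence by mixtures
`δ g0 + (1−δ) g^k` sharing one common Beta-mixture component `g0` together with
idiosyncratic Beta-mixture components `g^k`. -/
theorem common_component_KL_approx
    (K : ℕ) (hK : 1 ≤ K) (f0 : Fin K → ℝ → ℝ)
    (hcont : ∀ k, ContinuousOn (f0 k) (Set.Icc 0 1))
    (hpos : ∀ k, ∀ x ∈ Set.Icc (0 : ℝ) 1, 0 < f0 k x)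
    (hint : ∀ k, ∫ x in (0:ℝ)..1, f0 k x = 1)
    (ε : ℝ) (hε : 0 < ε) :
    ∃ (g0 : ℝ → ℝ) (g : Fin K → ℝ → ℝ) (δ : ℝ),
      IsBetaMixture g0 ∧ (∀ k, IsBetaMixture (g k)) ∧ δ ∈ Set.Ioo (0 : ℝ) 1 ∧
      ∀ k, (∫ x in (0:ℝ)..1,
              f0 k x * Real.log (f0 k x / (δ * g0 x + (1 - δ) * g k x))) < ε := by
  have hg0 := isBetaMixture_fBeta one_pos one_pos
  obtain ⟨g, δ, hg, hδ, hKL⟩ := common_component_KL_approx_general f0 hcont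
    (fun k x hx => (hpos k x hx).le) hint hg0 hε
  exact ⟨_, g, δ, hg0, hg, hδ, fun k => (hKL k).2⟩
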